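/- Let k ≥ 1, let H₁, …, H_k be complex Hilbert spaces, H = ⊕_{i=1}^k H_i, and 𝒜 a bounded linear operator on H with block entries A_{ij} : H_j → H_i. Then the block numerical range is contained in the classical numerical range: W_{H₁,…,H_k}(𝒜) ⊆ W(𝒜), i.e., every eigenvalue of a k×k matrix (⟨A_{ij} f_j, f_i⟩)_{i,j} with unit vectors f_i ∈ H_i is of the form ⟨𝒜x, x⟩ for some x ∈ H with ‖x‖ = 1. -/

import Mathlib

open scoped InnerProductSpace

/-- The Hilbert-space direct sum `⊕_{i} H i` (with the `ℓ²` product inner product) of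
complete spaces is complete. -/
instance piLp_completeSpace {k : ℕ} (H : Fin k → Type*) [∀ i, NormedAddCommGroup (H i)]
    [∀ i, CompleteSpace (H i)] : CompleteSpace (PiLp 2 H) :=
  inferInstance

/-!
If the `f i` are unit vectors, their copies `e i` in the direct sum are orthonormal and
`⟪f i, A i j (f j)⟫ = ⟪e i, 𝒜 (e j)⟫`, so the block matrix is the compression of `𝒜` to the span
of the `e i`. If `v` is an eigenvector of this matrix for `μ`, then `x = ∑ i, v i • e i` satisfies
`⟪x, 𝒜 x⟫ = μ ⟪x, x⟫`, and it remains to normalise `x`.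
-/

section NumericalRange

open scoped ComplexConjugate

variable {𝕜 E ι : Type*} [RCLike 𝕜] [SeminormedAddCommGroup E] [InnerProductSpace 𝕜 E]

/-- The numerical range `W(T)` of a linear operator. Inner products in Mathlib are linear in the
second argument, so `⟪x, T x⟫` is what is usually written `⟨T x, x⟩`. -/
def numericalRange (T : E →ₗ[𝕜] E) : Set 𝕜 :=
  {μ | ∃ x : E, ‖x‖ = 1 ∧ ⟪x, T x⟫_𝕜 = μ}

theorem mem_numericalRange_of_inner_eq_mul_inner_self {T : E →ₗ[𝕜] E} {μ : 𝕜} {x : E}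
    (hx : ‖x‖ ≠ 0) (h : ⟪x, T x⟫_𝕜 = μ * ⟪x, x⟫_𝕜) : μ ∈ numericalRange T := by
  have hx' : (‖x‖ : 𝕜) ≠ 0 := RCLike.ofReal_ne_zero.mpr hx
  refine ⟨(‖x‖⁻¹ : 𝕜) • x, by simp [norm_smul, hx], ?_⟩
  rw [map_smul, inner_smul_left, inner_smul_right, h, inner_self_eq_norm_sq_to_K, map_inv₀,
    RCLike.conj_ofReal]
  field_simp

theorem norm_sum_smul_ne_zero_of_orthonormal [Fintype ι] {e : ι → E} (he : Orthonormal 𝕜 e)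
    {v : ι → 𝕜} (hv : v ≠ 0) : ‖∑ i, v i • e i‖ ≠ 0 := by
  intro hx
  refine hv (funext fun i => ?_)
  have hle := norm_inner_le_norm (𝕜 := 𝕜) (e i) (∑ i, v i • e i)
  simpa [he.inner_right_fintype, hx] using hle

theorem mem_numericalRange_of_hasEigenvalue_compression [Fintype ι] {e : ι → E}
    (he : Orthonormal 𝕜 e) {T : E →ₗ[𝕜] E} {μ : 𝕜}
    (hμ : Module.End.HasEigenvalue (Matrix.of fun i j => ⟪e i, T (e j)⟫_𝕜).mulVecLin μ) :
    μ ∈ numericalRange T := by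
  obtain ⟨v, hv⟩ := hμ.exists_hasEigenvector
  have hx : ‖∑ i, v i • e i‖ ≠ 0 := norm_sum_smul_ne_zero_of_orthonormal he hv.2
  refine mem_numericalRange_of_inner_eq_mul_inner_self hx ?_
  have hcoord (i : ι) : ⟪e i, T (∑ j, v j • e j)⟫_𝕜 = μ * v i := by
    simpa [Matrix.mulVec, dotProduct, inner_sum, inner_smul_right, mul_comm] using
      congrFun hv.apply_eq_smul i
  calc ⟪∑ i, v i • e i, T (∑ j, v j • e j)⟫_𝕜
      = ∑ i, conj (v i) * (μ * v i) := by simp only [sum_inner, inner_smul_left, hcoord]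
    _ = μ * ∑ i, conj (v i) * v i := by simp only [Finset.mul_sum, mul_left_comm]
    _ = μ * ⟪∑ i, v i • e i, ∑ j, v j • e j⟫_𝕜 := by rw [he.inner_sum]

end NumericalRange

section BlockNumericalRange

theorem sum_apply_piLp_single {R M ι : Type*} {β : ι → Type*} [Semiring R] [AddCommMonoid M]
    [Module R M] [∀ i, AddCommMonoid (β i)] [∀ i, Module R (β i)] [Fintype ι] [DecidableEq ι]
    (p : ENNReal) (g : ∀ i, β i →ₗ[R] M) (j : ι) (b : β j) :
    ∑ i, g i (PiLp.single p j b i) = g j b := by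
  rw [Fintype.sum_eq_single j fun i hi => by simp [hi], PiLp.single_eq_same]

variable {𝕜 ι : Type*} [RCLike 𝕜] [Fintype ι] {H : ι → Type*} [∀ i, NormedAddCommGroup (H i)]
  [∀ i, InnerProductSpace 𝕜 (H i)]

/-- The block numerical range `W_{H₁,…,H_k}(𝒜)` of the operator `𝒜` on `⊕ i, H i`, as a function
of the block entries `A i j : H j → H i` of `𝒜`. -/
def blockNumericalRange (A : ∀ i j, H j →ₗ[𝕜] H i) : Set 𝕜 :=
  {μ | ∃ f : ∀ i, H i, (∀ i, ‖f i‖ = 1) ∧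
    Module.End.HasEigenvalue (Matrix.of fun i j => ⟪f i, A i j (f j)⟫_𝕜).mulVecLin μ}

theorem inner_piLp_single_left [DecidableEq ι] (i : ι) (a : H i) (y : PiLp 2 H) :
    ⟪PiLp.single 2 i a, y⟫_𝕜 = ⟪a, y i⟫_𝕜 := by
  rw [PiLp.inner_apply, Fintype.sum_eq_single i fun j hj => by simp [hj], PiLp.single_eq_same]

theorem orthonormal_piLp_single [DecidableEq ι] {f : ∀ i, H i} (hf : ∀ i, ‖f i‖ = 1) :
    Orthonormal 𝕜 fun i => (PiLp.single 2 i (f i) : PiLp 2 H) := by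
  refine ⟨fun i => by rw [PiLp.norm_single, hf i], fun i j hij => ?_⟩
  simp only [inner_piLp_single_left, PiLp.single_eq_of_ne 2 hij, inner_zero_right]

theorem blockNumericalRange_subset_numericalRange_general {𝒜 : PiLp 2 H →ₗ[𝕜] PiLp 2 H}
    {A : ∀ i j, H j →ₗ[𝕜] H i} (h𝒜 : ∀ x i, 𝒜 x i = ∑ j, A i j (x j)) :
    blockNumericalRange A ⊆ numericalRange 𝒜 := by
  classical
  rintro μ ⟨f, hf, hμ⟩
  refine mem_numericalRange_of_hasEigenvalue_compression (orthonormal_piLp_single hf) ?_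
  simpa only [inner_piLp_single_left, h𝒜, sum_apply_piLp_single] using hμ

end BlockNumericalRange

/-- The block numerical range is contained in the classical numerical range,
`W_{H₁,…,H_k}(𝒜) ⊆ W(𝒜)`: every eigenvalue `λ` of a `k×k` matrix
`(⟨A_{ij} f_j, f_i⟩)_{i,j}` built from unit vectors `f i ∈ H i` is of the form `⟨𝒜x, x⟩`
for some unit vector `x ∈ H = ⊕_{i=1}^k H_i`. -/
theorem blockNumericalRange_subset_numericalRange
    (k : ℕ) (hk : 1 ≤ k) (H : Fin k → Type*) [∀ i, NormedAddCommGroup (H i)]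
    [∀ i, InnerProductSpace ℂ (H i)] [∀ i, CompleteSpace (H i)]
    (𝒜 : PiLp 2 H →L[ℂ] PiLp 2 H) (A : ∀ i j, H j →L[ℂ] H i)
    (h𝒜 : ∀ (x : PiLp 2 H) (i : Fin k),
      (WithLp.equiv 2 (∀ i, H i)) (𝒜 x) i = ∑ j, A i j ((WithLp.equiv 2 (∀ i, H i)) x j))
    (lam : ℂ) (f : ∀ i, H i) (hf : ∀ i, ‖f i‖ = 1) (v : Fin k → ℂ) (hv : v ≠ 0)
    (heig : (Matrix.of fun i j => ⟪f i, A i j (f j)⟫_ℂ).mulVec v = lam • v) :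
    ∃ x : PiLp 2 H, ‖x‖ = 1 ∧ ⟪x, 𝒜 x⟫_ℂ = lam :=
  blockNumericalRange_subset_numericalRange_general (A := fun i j => A i j) h𝒜
    ⟨f, hf, Module.End.hasEigenvalue_of_hasEigenvector
      ⟨Module.End.mem_eigenspace_iff.mpr heig, hv⟩⟩
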